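/- Let K be a field of characteristic zero and let the symmetric group S_m act on the polynomial ring K[x_{ij} : 1 ≤ i ≤ N, 1 ≤ j ≤ m] by simultaneously permuting the second index: σ·x_{ij} = x_{iσ(j)}. Then the ring of invariants is generated, as a K-algebra, by the power sums s_{r_1,…,r_N} = Σ_{j=1}^m x_{1j}^{r_1} x_{2j}^{r_2} ⋯ x_{Nj}^{r_N}, for r_1, …, r_N ≥ 0. -/

import Mathlib

open scoped BigOperators

noncomputable section

/-- A quiver with a finite vertex set `I` and a finite arrow set `A`;
`h a` and `t a` are the head and the tail of the arrow `a`. -/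
structure FinQuiver where
  I : Type
  [fintypeI : Fintype I]
  [decEqI : DecidableEq I]
  A : Type
  [fintypeA : Fintype A]
  h : A → I
  t : A → I

attribute [instance] FinQuiver.fintypeI FinQuiver.decEqI FinQuiver.fintypeA

namespace FinQuiver

variable (Q : FinQuiver)

/-- Arrows of the double quiver `Q̄` : every arrow `a : i → j` of `Q` (as `Sum.inl a`)
together with a reverse arrow `a* : j → i` (as `Sum.inr a`). -/
@[reducible] def DA : Type := Q.A ⊕ Q.A

instance : Fintype Q.DA := inferInstanceAs (Fintype (Q.A ⊕ Q.A))

/-- Head of an arrow of the double quiver. -/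
@[reducible] def dh : Q.DA → Q.I := fun a => match a with
  | Sum.inl a => Q.h a
  | Sum.inr a => Q.t a

/-- Tail of an arrow of the double quiver. -/
@[reducible] def dt : Q.DA → Q.I := fun a => match a with
  | Sum.inl a => Q.t a
  | Sum.inr a => Q.h a

/-- The symmetric bilinear form
`(α,β) = ∑_{i∈I} 2 α_i β_i − ∑_{a∈Q̄} α_{h(a)} β_{t(a)}` on `ℤ^I`. -/
def bil (α β : Q.I → ℤ) : ℤ :=
  (∑ i, 2 * α i * β i) - ∑ a : Q.DA, α (Q.dh a) * β (Q.dt a)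

/-- `p(α) = 1 − q(α) = 1 − α·α + ∑_{a ∈ Q} α_{t(a)} α_{h(a)}`. -/
def pp (α : Q.I → ℤ) : ℤ :=
  1 - (∑ i, α i * α i) + ∑ a : Q.A, α (Q.t a) * α (Q.h a)

/-- The coordinate vector `ε_i` at a vertex `i`. -/
def ev (i : Q.I) : Q.I → ℤ := fun j => if j = i then 1 else 0

/-- The coordinate vector of a vertex, as a vector of natural numbers. -/
def evN (i : Q.I) : Q.I → ℕ := fun j => if j = i then 1 else 0

/-- A vertex is loopfree if no arrow has both its head and its tail there. -/
def Loopfree (i : Q.I) : Prop := ∀ a : Q.A, ¬ (Q.h a = i ∧ Q.t a = i)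

/-- The reflection `s_i(α) = α − (α,ε_i) ε_i` at a (loopfree) vertex `i`. -/
def refl (i : Q.I) (α : Q.I → ℤ) : Q.I → ℤ := α - Q.bil α (Q.ev i) • Q.ev i

/-- Two vertices are joined by some arrow. -/
def Adj (i j : Q.I) : Prop :=
  ∃ a : Q.A, (Q.h a = i ∧ Q.t a = j) ∨ (Q.h a = j ∧ Q.t a = i)

/-- The quiver is connected. -/
def Connected : Prop := ∀ i j : Q.I, Relation.ReflTransGen Q.Adj i j

/-- The support of the vector `α` is connected in `Q`. -/
def SuppConnected (α : Q.I → ℤ) : Prop :=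
  ∀ i j : Q.I, α i ≠ 0 → α j ≠ 0 →
    Relation.ReflTransGen (fun x y => α x ≠ 0 ∧ α y ≠ 0 ∧ Q.Adj x y) i j

/-- The fundamental region: nonzero nonnegative vectors with connected support
such that `(α, ε_i) ≤ 0` for every vertex `i`. -/
def InFund (α : Q.I → ℤ) : Prop :=
  α ≠ 0 ∧ (∀ i, 0 ≤ α i) ∧ Q.SuppConnected α ∧ ∀ i, Q.bil α (Q.ev i) ≤ 0

/-- The roots of the Kac root system attached to `Q` : the real roots form the orbit
of the simple roots (coordinate vectors at loopfree vertices) under the reflections at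
loopfree vertices, and the imaginary roots form the orbit of `±(fundamental region)`
under these reflections. -/
inductive IsRoot : (Q.I → ℤ) → Prop
  | simple (i : Q.I) (hi : Q.Loopfree i) : IsRoot (Q.ev i)
  | fund (α : Q.I → ℤ) (hα : Q.InFund α) : IsRoot α
  | neg_fund (α : Q.I → ℤ) (hα : Q.InFund α) : IsRoot (-α)
  | reflect (i : Q.I) (hi : Q.Loopfree i) (α : Q.I → ℤ) (hα : IsRoot α) :
      IsRoot (Q.refl i α)

/-- Positive roots: roots all of whose components are nonnegative. -/
def IsPosRoot (α : Q.I → ℤ) : Prop := Q.IsRoot α ∧ (∀ i, 0 ≤ α i) ∧ α ≠ 0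

/-- The Tits form is positive semidefinite. -/
def PosSemidef : Prop := ∀ α : Q.I → ℤ, 0 ≤ Q.bil α α

/-- The Tits form is positive definite. -/
def PosDef : Prop := Q.PosSemidef ∧ ∀ α : Q.I → ℤ, Q.bil α α = 0 → α = 0

/-- Dynkin quivers: connected, with positive definite Tits form. -/
def IsDynkin : Prop := Q.Connected ∧ Q.PosDef

/-- Extended Dynkin quivers: connected, with positive semidefinite but not
positive definite Tits form. -/
def IsExtDynkin : Prop := Q.Connected ∧ Q.PosSemidef ∧ ¬ Q.PosDef

/-- `δ` is the minimal positive imaginary root of an extended Dynkin quiver: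
the minimal nonzero nonnegative vector in the radical of the Tits form. -/
def IsMinImag (δ : Q.I → ℤ) : Prop :=
  (∀ i, 0 ≤ δ i) ∧ δ ≠ 0 ∧ (∀ i, Q.bil δ (Q.ev i) = 0) ∧
    ∀ β : Q.I → ℤ, (∀ i, 0 ≤ β i) → β ≠ 0 → (∀ i, Q.bil β (Q.ev i) = 0) →
      ∀ i, δ i ≤ β i

/-- The subquiver of `Q` on a subset `S` of vertices and a subset `B` of arrows. -/
def restrict (S : Set Q.I) (B : Set Q.A) (hh : ∀ a ∈ B, Q.h a ∈ S)
    (ht : ∀ a ∈ B, Q.t a ∈ S) : FinQuiver :=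
  { I := S
    fintypeI := Fintype.ofFinite S
    decEqI := Classical.decEq _
    A := B
    fintypeA := Fintype.ofFinite B
    h := fun a => ⟨Q.h a.1, hh a.1 a.2⟩
    t := fun a => ⟨Q.t a.1, ht a.1 a.2⟩ }

/-- The support quiver of a vector: the full subquiver on the support of `β`. -/
def suppQuiver (β : Q.I → ℤ) : FinQuiver :=
  Q.restrict {i | β i ≠ 0} {a | β (Q.h a) ≠ 0 ∧ β (Q.t a) ≠ 0}
    (fun _ ha => ha.1) (fun _ ha => ha.2)

/-- A dimension vector (of natural numbers), viewed in `ℤ^I`. -/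
def toZ (α : Q.I → ℕ) : Q.I → ℤ := fun i => (α i : ℤ)

/-- An oriented cycle in the double quiver `Q̄`, consisting of `n+1` arrows,
the tail of each arrow being the head of the (cyclically) next one. -/
structure Cyc (Q' : FinQuiver) where
  n : ℕ
  ar : Fin (n + 1) → Q'.DA
  compat : ∀ i : Fin (n + 1), Q'.dt (ar i) = Q'.dh (ar (i + 1))

section WithField

variable (K : Type) [Field K]

/-- `λ·α = ∑_i λ_i α_i`. -/
def pair (l : Q.I → K) (α : Q.I → ℤ) : K := ∑ i, l i * (α i : K)

/-- `R_λ^+`, the set of positive roots `α` with `λ·α = 0`. -/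
def Rplus (l : Q.I → K) : Set (Q.I → ℤ) :=
  {α | Q.IsPosRoot α ∧ Q.pair K l α = 0}

/-- `ℕ R_λ^+`, the set of sums (including the empty sum `0`) of elements of `R_λ^+`. -/
def NRplus (l : Q.I → K) : Set (Q.I → ℤ) :=
  (AddSubmonoid.closure (Q.Rplus K l) : AddSubmonoid (Q.I → ℤ))

/-- `Σ_λ` : the elements `α ∈ R_λ^+` with `p(α) > ∑ p(β⁽ᵗ⁾)` for every decomposition
of `α` as a sum of at least two elements `β⁽ᵗ⁾` of `R_λ^+`. -/
def SigmaSet (l : Q.I → K) : Set (Q.I → ℤ) :=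
  {α | α ∈ Q.Rplus K l ∧
    ∀ (n : ℕ) (β : Fin n → (Q.I → ℤ)), 2 ≤ n → (∀ j, β j ∈ Q.Rplus K l) →
      α = ∑ j, β j → (∑ j, Q.pp (β j)) < Q.pp α}

/-- The dual reflection `r_i(λ)_j = λ_j − (ε_i,ε_j) λ_i`. -/
def coRefl (i : Q.I) (l : Q.I → K) : Q.I → K :=
  fun j => l j - (Q.bil (Q.ev i) (Q.ev j) : ℤ) * l i

/-- A single admissible reflection applied to the pair `(λ, α)`:
a reflection at a loopfree vertex `i` with `λ_i ≠ 0`. -/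
def AdmStep (x y : (Q.I → K) × (Q.I → ℤ)) : Prop :=
  ∃ i : Q.I, Q.Loopfree i ∧ x.1 i ≠ 0 ∧ y.1 = Q.coRefl K i x.1 ∧ y.2 = Q.refl i x.2

/-- `(ν,β)` is obtained from `(λ,α)` by a sequence of admissible reflections:
the two pairs lie in the same class of the equivalence relation generated by
admissible reflections. -/
def AdmEquiv (x y : (Q.I → K) × (Q.I → ℤ)) : Prop :=
  Relation.EqvGen (Q.AdmStep K) x y

/-- The space `Rep(Q̄,α)` of representations of the double quiver. -/
def Rep (α : Q.I → ℕ) : Type :=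
  ∀ a : Q.DA, Matrix (Fin (α (Q.dh a))) (Fin (α (Q.dt a))) K

/-- The moment map
`μ_α(x)_i = ∑_{a∈Q, h(a)=i} x_a x_{a*} − ∑_{a∈Q, t(a)=i} x_{a*} x_a`. -/
def moment (α : Q.I → ℕ) (x : Q.Rep K α) (i : Q.I) :
    Matrix (Fin (α i)) (Fin (α i)) K :=
  (∑ a : Q.A, if h : Q.h a = i then
      (x (Sum.inl a) * x (Sum.inr a)).submatrix
        (Fin.cast (congrArg α h).symm) (Fin.cast (congrArg α h).symm)
    else 0)
  - ∑ a : Q.A, if h : Q.t a = i then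
      (x (Sum.inr a) * x (Sum.inl a)).submatrix
        (Fin.cast (congrArg α h).symm) (Fin.cast (congrArg α h).symm)
    else 0

/-- The fibre `μ_α^{-1}(λ)` of the moment map over (the central element
corresponding to) `λ`. -/
def MomentFiber (l : Q.I → K) (α : Q.I → ℕ) : Set (Q.Rep K α) :=
  {x | ∀ i : Q.I, Q.moment K α x i = l i • (1 : Matrix (Fin (α i)) (Fin (α i)) K)}

/-- The group `∏_i GL(α_i,K)`; it acts on `Rep(Q̄,α)` by conjugation, with the same
orbits and the same invariant functions as `G(α) = (∏_i GL(α_i,K))/K^*`. -/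
def Gl (α : Q.I → ℕ) : Type := ∀ i : Q.I, Matrix.GeneralLinearGroup (Fin (α i)) K

/-- The conjugation action of `∏_i GL(α_i,K)` on `Rep(Q̄,α)`. -/
def glAct (α : Q.I → ℕ) (g : Q.Gl K α) (x : Q.Rep K α) : Q.Rep K α :=
  fun a => (g (Q.dh a) : Matrix (Fin (α (Q.dh a))) (Fin (α (Q.dh a))) K) * x a *
    (((g (Q.dt a))⁻¹ : Matrix.GeneralLinearGroup (Fin (α (Q.dt a))) K) :
      Matrix (Fin (α (Q.dt a))) (Fin (α (Q.dt a))) K)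

/-- Coordinates on `Rep(Q̄,α)`: matrix entries. -/
def Coords (α : Q.I → ℕ) : Type :=
  Σ a : Q.DA, Fin (α (Q.dh a)) × Fin (α (Q.dt a))

/-- The coordinate ring `K[V]` of a subset `V` of `Rep(Q̄,α)` : the algebra of
`K`-valued functions on `V` which are restrictions of polynomial functions. -/
def fnRing (α : Q.I → ℕ) (V : Set (Q.Rep K α)) : Subalgebra K (↥V → K) :=
  (MvPolynomial.aeval
    (fun c : Q.Coords α => fun v : ↥V => v.1 c.1 c.2.1 c.2.2) :
    MvPolynomial (Q.Coords α) K →ₐ[K] (↥V → K)).range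

end WithField

end FinQuiver

/-- The subalgebra of functions invariant under a relation (e.g. the orbit
relation of a group action). -/
def relInv (K : Type) [Field K] {V : Type} (R : V → V → Prop) :
    Subalgebra K (V → K) where
  carrier := {f | ∀ x y : V, R x y → f x = f y}
  mul_mem' := by
    intro f g hf hg x y hxy
    simp only [Pi.mul_apply, hf x y hxy, hg x y hxy]
  one_mem' := fun x y _ => rfl
  add_mem' := by
    intro f g hf hg x y hxy
    simp only [Pi.add_apply, hf x y hxy, hg x y hxy]
  zero_mem' := fun x y _ => rfl
  algebraMap_mem' := fun c x y _ => rfl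

namespace FinQuiver

variable (Q : FinQuiver) (K : Type) [Field K]

/-- The coordinate ring of the Marsden–Weinstein reduction
`N(λ,α) = μ_α^{-1}(λ) ⫽ G(α)` : the `G(α)`-invariant functions in the coordinate
ring of `μ_α^{-1}(λ)`.  Two such reductions are isomorphic as (affine) varieties
exactly when these `K`-algebras are isomorphic. -/
def InvRing (l : Q.I → K) (α : Q.I → ℕ) :
    Subalgebra K (↥(Q.MomentFiber K l α) → K) :=
  Q.fnRing K α (Q.MomentFiber K l α) ⊓
    relInv K (fun x y : ↥(Q.MomentFiber K l α) =>
      ∃ g : Q.Gl K α, y.1 = Q.glAct K α g x.1)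

/-- Index type for a product `∏_t X_t^{m_t}`. -/
@[reducible] def SymIdx (s : ℕ) (m : Fin s → ℕ) : Type := Σ t : Fin s, Fin (m t)

/-- The product `∏_{t} Rep(Q̄, d_t)^{m_t}` of representation spaces. -/
def SymRep (s : ℕ) (m : Fin s → ℕ) (d : Fin s → (Q.I → ℕ)) : Type :=
  ∀ p : SymIdx s m, Q.Rep K (d p.1)

/-- The product `∏_t μ_{d_t}^{-1}(λ)^{m_t}` of moment map fibres. -/
def SymFiber (s : ℕ) (m : Fin s → ℕ) (d : Fin s → (Q.I → ℕ)) (l : Q.I → K) :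
    Set (Q.SymRep K s m d) :=
  {x | ∀ p : SymIdx s m, x p ∈ Q.MomentFiber K l (d p.1)}

/-- Polynomial functions on the product of fibres. -/
def symFnRing (s : ℕ) (m : Fin s → ℕ) (d : Fin s → (Q.I → ℕ)) (l : Q.I → K) :
    Subalgebra K (↥(Q.SymFiber K s m d l) → K) :=
  (MvPolynomial.aeval
    (fun c : Σ p : SymIdx s m, Q.Coords (d p.1) =>
      fun v : ↥(Q.SymFiber K s m d l) => v.1 c.1 c.2.1 c.2.2.1 c.2.2.2) :
    MvPolynomial (Σ p : SymIdx s m, Q.Coords (d p.1)) K →ₐ[K]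
      (↥(Q.SymFiber K s m d l) → K)).range

/-- The componentwise action of the product of the groups `∏ GL(d_t)^{m_t}`. -/
def symGlAct (s : ℕ) (m : Fin s → ℕ) (d : Fin s → (Q.I → ℕ))
    (g : ∀ p : SymIdx s m, Q.Gl K (d p.1)) (x : Q.SymRep K s m d) :
    Q.SymRep K s m d :=
  fun p => Q.glAct K (d p.1) (g p) (x p)

/-- The action of `∏_t S_{m_t}` permuting the factors of each `X_t^{m_t}`. -/
def symPermAct (s : ℕ) (m : Fin s → ℕ) (d : Fin s → (Q.I → ℕ))
    (π : ∀ t : Fin s, Equiv.Perm (Fin (m t))) (x : Q.SymRep K s m d) :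
    Q.SymRep K s m d :=
  fun p => x ⟨p.1, π p.1 p.2⟩

/-- The coordinate ring of the product of symmetric products
`∏_t S^{m_t} N(λ, d_t)` of Marsden–Weinstein reductions: functions on
`∏_t μ_{d_t}^{-1}(λ)^{m_t}` which are polynomial, invariant under all the groups
`G(d_t)` acting on the separate factors, and symmetric under permutations of the
`m_t` factors of each type `t`. -/
def SymInvRing (s : ℕ) (m : Fin s → ℕ) (d : Fin s → (Q.I → ℕ)) (l : Q.I → K) :
    Subalgebra K (↥(Q.SymFiber K s m d l) → K) :=
  Q.symFnRing K s m d l ⊓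
    relInv K (fun x y : ↥(Q.SymFiber K s m d l) =>
      ∃ g : ∀ p : SymIdx s m, Q.Gl K (d p.1), y.1 = Q.symGlAct K s m d g x.1) ⊓
    relInv K (fun x y : ↥(Q.SymFiber K s m d l) =>
      ∃ π : ∀ t : Fin s, Equiv.Perm (Fin (m t)), y.1 = Q.symPermAct K s m d π x.1)

/-- The trace function `tr_p` of an oriented cycle `p` in `Q̄` :
`tr_p(x) = tr(x_{a_1} ⋯ x_{a_ℓ})`, written out via matrix entries. -/
def cycTr (α : Q.I → ℕ) (p : Q.Cyc) (x : Q.Rep K α) : K :=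
  ∑ c : ∀ i : Fin (p.n + 1), Fin (α (Q.dh (p.ar i))),
    ∏ i : Fin (p.n + 1),
      x (p.ar i) (c i) (Fin.cast (congrArg α (p.compat i)).symm (c (i + 1)))

/-- `U` is a subrepresentation of the `Π^λ`-module given by the point
`x ∈ Rep(Q̄,α)` : a collection of subspaces stable under all the maps `x_a`. -/
def SubRep (α : Q.I → ℕ) (x : Q.Rep K α)
    (U : ∀ i : Q.I, Submodule K (Fin (α i) → K)) : Prop :=
  ∀ a : Q.DA, ∀ v ∈ U (Q.dt a), (x a).mulVec v ∈ U (Q.dh a)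

/-- The module given by `x` has the simple module `S_{i₀}` (dimension vector
`ε_{i₀}`, all arrows acting as zero) as a composition factor: it has a subquotient
of dimension vector `ε_{i₀}` on which all arrows act as zero. -/
def HasSFactor (α : Q.I → ℕ) (i0 : Q.I) (x : Q.Rep K α) : Prop :=
  ∃ U W : ∀ i : Q.I, Submodule K (Fin (α i) → K),
    Q.SubRep K α x U ∧ Q.SubRep K α x W ∧ (∀ i, U i ≤ W i) ∧
    (∀ i, Module.finrank K (W i) =
      Module.finrank K (U i) + (if i = i0 then 1 else 0)) ∧
    (∀ a : Q.DA, Q.dh a = i0 → Q.dt a = i0 →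
      ∀ v ∈ W (Q.dt a), (x a).mulVec v ∈ U (Q.dh a))

/-- `W/U` is a simple subquotient of the module given by `x`; the simple
subquotients of a module are, up to isomorphism, exactly its composition factors. -/
def SimpleSubquot (α : Q.I → ℕ) (x : Q.Rep K α)
    (U W : ∀ i : Q.I, Submodule K (Fin (α i) → K)) : Prop :=
  Q.SubRep K α x U ∧ Q.SubRep K α x W ∧ (∀ i, U i ≤ W i) ∧ U ≠ W ∧
    ∀ V : ∀ i : Q.I, Submodule K (Fin (α i) → K),
      Q.SubRep K α x V → (∀ i, U i ≤ V i) → (∀ i, V i ≤ W i) → V = U ∨ V = W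

/-- The direct sum map `∏_{j=1}^m Rep(Q̄,δ) → Rep(Q̄,mδ)` (block diagonal). -/
def dsMap (δ : Q.I → ℕ) (m : ℕ) (y : Fin m → Q.Rep K δ) :
    Q.Rep K (fun i => m * δ i) :=
  fun a => Matrix.of fun r c =>
    if (finProdFinEquiv.symm r).1 = (finProdFinEquiv.symm c).1 then
      y (finProdFinEquiv.symm r).1 a (finProdFinEquiv.symm r).2
        (finProdFinEquiv.symm c).2
    else 0

end FinQuiver

/-!
Averaging over `S_m` writes an invariant as a linear combination of symmetrized monomials, once
`m!` is invertible. A monomial is a product `∏ j, φ_j (b j)` of monomials `b j` in the `j`-th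
columns, where `φ_j : x_i ↦ x_{ij}`, so it remains to express `∑ e, ∏ i, φ_{e i} (b i)`, the sum
being over injections `e`, through the one-column sums `∑ j, φ_j b`. When an injection is extended
by one more index, the new value ranges over everything except the values already taken; the
excluded terms are sums of the same shape over the shorter injections, in which the new factor has
been absorbed into one of the old ones.
-/

section Embedding

variable {ι κ : Type*} [Fintype ι] [Fintype κ]

theorem sum_compl_range_embedding {M : Type*} [AddCommGroup M] (e : ι ↪ κ)
    [Fintype ↥(Set.range e)ᶜ] (w : κ → M) :
    ∑ k : ↥(Set.range e)ᶜ, w k = ∑ k, w k - ∑ i, w (e i) := by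
  classical
  have sum_range : ∑ i, w (e i) = ∑ k : Set.range e, w k :=
    (Equiv.ofInjective e e.injective).sum_comp fun k => w k
  rw [sum_range, eq_sub_iff_add_eq']
  convert Fintype.sum_subtype_add_sum_subtype (· ∈ Set.range e) w

variable {B S : Type*} [MulOneClass B]

theorem prod_map_mul_mulSingle [DecidableEq ι] [CommMonoid S] (φ : ι → B →* S)
    (b : ι → B) (l : ι) (c : B) :
    ∏ i, φ i ((b * Pi.mulSingle l c : ι → B) i) = (∏ i, φ i (b i)) * φ l c := by
  simp only [Pi.mul_apply, map_mul, Finset.prod_mul_distrib]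
  congr 1
  rw [Fintype.prod_eq_single l fun i hi => by rw [Pi.mulSingle_eq_of_ne hi, map_one],
    Pi.mulSingle_eq_same]

variable [CommRing S]

theorem sum_embedding_option_prod [DecidableEq ι] (φ : κ → B →* S) (b : Option ι → B) :
    ∑ e : Option ι ↪ κ, ∏ i, φ (e i) (b i) =
      (∑ e : ι ↪ κ, ∏ i, φ (e i) (b (some i))) * ∑ k, φ k (b none) -
        ∑ l, ∑ e : ι ↪ κ, ∏ i, φ (e i) ((b ∘ some * Pi.mulSingle l (b none) : ι → B) i) := by
  classical
  calc ∑ e : Option ι ↪ κ, ∏ i, φ (e i) (b i)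
    _ = ∑ e : ι ↪ κ, ∑ k : ↥(Set.range e)ᶜ, (∏ i, φ (e i) (b (some i))) * φ k (b none) := by
        rw [← (Function.Embedding.optionEmbeddingEquiv ι κ).symm.sum_comp, Fintype.sum_sigma]
        simp [Fintype.prod_option, mul_comm]
    _ = ∑ e : ι ↪ κ, (∏ i, φ (e i) (b (some i))) *
          (∑ k, φ k (b none) - ∑ l, φ (e l) (b none)) := by
        simp only [← Finset.mul_sum, sum_compl_range_embedding _ fun k => φ k (b none)]
    _ = _ := by
        rw [Finset.sum_comm]
        simp only [fun e : ι ↪ κ => prod_map_mul_mulSingle (fun i => φ (e i)), mul_sub,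
          Finset.sum_sub_distrib, ← Finset.mul_sum, ← Finset.sum_mul, Function.comp_apply]

theorem sum_embedding_prod_mem {T : Type*} [SetLike T S] [SubringClass T S] (A : T)
    (φ : κ → B →* S) (hφ : ∀ b, ∑ k, φ k b ∈ A) (b : ι → B) :
    ∑ e : ι ↪ κ, ∏ i, φ (e i) (b i) ∈ A := by
  suffices ∀ [Fintype ι] (b : ι → B), ∑ e : ι ↪ κ, ∏ i, φ (e i) (b i) ∈ A from this b
  clear b
  induction ι using Finite.induction_empty_option with
  | of_equiv f ih =>
    intro _ b
    have := Fintype.ofEquiv _ f.symm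
    rw [← (f.embeddingCongr (Equiv.refl κ)).sum_comp]
    convert ih (b ∘ f) using 2 with e
    exact (f.prod_comp _).symm.trans (by simp)
  | h_empty =>
    intro _ b
    simp
  | @h_option ι _ ih =>
    intro _ b
    classical
    obtain rfl := Subsingleton.elim ‹Fintype (Option ι)› instFintypeOption
    rw [sum_embedding_option_prod]
    exact sub_mem (mul_mem (ih fun i => b (some i)) (hφ (b none))) (sum_mem fun l _ => ih _)

end Embedding

open MvPolynomial

section PowerSum

variable (R : Type*) [CommSemiring R] {ι : Type*} (κ : Type*) [Fintype κ]

/-- The power sums `s_r = ∑_j ∏_i x_{ij} ^ r_i` in the variables `x_{ij}`, which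
generate the invariants of the permutations of the index `j`. The exponents are finitely supported
so that infinitely many values of `i` are allowed. -/
def polarizedPowerSum (r : ι →₀ ℕ) : MvPolynomial (ι × κ) R :=
  ∑ j, rename (·, j) (monomial r 1)

theorem range_polarizedPowerSum [Fintype ι] :
    Set.range (polarizedPowerSum R κ) = {g : MvPolynomial (ι × κ) R | ∃ r : ι → ℕ,
      g = ∑ j : κ, ∏ i : ι, X (i, j) ^ r i} := by
  have eq_sum_prod (r : ι →₀ ℕ) :
      polarizedPowerSum R κ r = ∑ j : κ, ∏ i : ι, X (i, j) ^ r i := by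
    simp [polarizedPowerSum, monomial_eq, Finsupp.prod_fintype]
  ext g
  rw [Set.mem_range, Finsupp.equivFunOnFinite.exists_congr_left]
  simp [eq_sum_prod, eq_comm]

variable {R κ}

theorem rename_perm_polarizedPowerSum (σ : Equiv.Perm κ) (r : ι →₀ ℕ) :
    rename (Prod.map id σ) (polarizedPowerSum R κ r) = polarizedPowerSum R κ r := by
  simp only [polarizedPowerSum, map_sum, rename_rename]
  exact Equiv.sum_comp σ fun j => rename (·, j) (monomial r (1 : R))

theorem sum_rename_mem_adjoin_polarizedPowerSum (p : MvPolynomial ι R) :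
    ∑ j : κ, rename (·, j) p ∈ Algebra.adjoin R (Set.range (polarizedPowerSum R κ)) := by
  induction p using induction_on' with
  | monomial r c =>
    have smul_powerSum :
        ∑ j : κ, rename (·, j) (monomial r c) = c • polarizedPowerSum R κ r := by
      simp [polarizedPowerSum, Finset.smul_sum, ← map_smul]
    rw [smul_powerSum]
    exact Subalgebra.smul_mem _ (Algebra.subset_adjoin (Set.mem_range_self r)) c
  | add p q hp hq =>
    simp only [map_add, Finset.sum_add_distrib]
    exact add_mem hp hq

theorem monomial_one_eq_prod_rename (d : ι × κ →₀ ℕ) :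
    monomial d (1 : R) = ∏ j, rename (·, j)
      (monomial (d.comapDomain (·, j) (Prod.mk_left_injective j).injOn) 1) := by
  simp only [rename_monomial, ← monomial_sum_one]
  refine congrArg (monomial · 1) (Finsupp.ext fun ⟨i, k⟩ => ?_)
  rw [Finsupp.finsetSum_apply, Fintype.sum_eq_single k]
  · exact (Finsupp.mapDomain_apply (Prod.mk_left_injective k)
      (d.comapDomain (·, k) (Prod.mk_left_injective k).injOn) i).symm
  · intro j hj
    exact Finsupp.mapDomain_of_notMem_range _ _ (by simpa using hj)

theorem rename_perm_of_mem_adjoin_polarizedPowerSum {f : MvPolynomial (ι × κ) R}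
    (hf : f ∈ Algebra.adjoin R (Set.range (polarizedPowerSum R κ))) (σ : Equiv.Perm κ) :
    rename (Prod.map id σ) f = f :=
  AlgHom.adjoin_le_equalizer (rename (Prod.map id σ)) (AlgHom.id R _)
    (Set.forall_mem_range.mpr (rename_perm_polarizedPowerSum σ)) hf

end PowerSum

section Averaging

variable {R ι κ : Type*} [CommRing R] [Fintype κ]

theorem sum_rename_perm_mem_adjoin_polarizedPowerSum [DecidableEq κ] (f : MvPolynomial (ι × κ) R) :
    ∑ σ : Equiv.Perm κ, rename (Prod.map id σ) f ∈
      Algebra.adjoin R (Set.range (polarizedPowerSum R κ)) := by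
  induction f using induction_on' with
  | monomial d c =>
    let column (j : κ) : MvPolynomial ι R :=
      monomial (d.comapDomain (·, j) (Prod.mk_left_injective j).injOn) 1
    have rename_perm_monomial (σ : Equiv.Perm κ) : rename (Prod.map id σ) (monomial d c) =
        c • ∏ j, rename (·, σ j) (column j) := by
      calc rename (Prod.map id σ) (monomial d c)
        _ = c • rename (Prod.map id σ) (monomial d 1) := by simp [← map_smul]
        _ = _ := by
          simp only [monomial_one_eq_prod_rename, map_prod, rename_rename]
          rfl
    simp only [rename_perm_monomial, ← Finset.smul_sum]
    refine Subalgebra.smul_mem _ ?_ c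
    rw [← (Equiv.embeddingEquivOfFinite κ).sum_comp]
    exact sum_embedding_prod_mem (Algebra.adjoin R (Set.range (polarizedPowerSum R κ)))
      (fun j => (rename (R := R) (·, j)).toMonoidHom) sum_rename_mem_adjoin_polarizedPowerSum column
  | add p q hp hq =>
    simp only [map_add, Finset.sum_add_distrib]
    exact add_mem hp hq

theorem stmt15_general (hκ : IsUnit ((Fintype.card κ).factorial : R)) (f : MvPolynomial (ι × κ) R) :
    (∀ σ : Equiv.Perm κ, rename (Prod.map id σ) f = f) ↔
      f ∈ Algebra.adjoin R (Set.range (polarizedPowerSum R κ)) := by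
  classical
  refine ⟨fun hf => ?_, rename_perm_of_mem_adjoin_polarizedPowerSum⟩
  have sum_eq_smul : ∑ σ : Equiv.Perm κ, rename (Prod.map id σ) f =
      ((Fintype.card κ).factorial : R) • f := by
    simp [hf, Fintype.card_perm, Nat.cast_smul_eq_nsmul]
  have smul_mem := sum_rename_perm_mem_adjoin_polarizedPowerSum f
  rw [sum_eq_smul] at smul_mem
  exact (Submodule.smul_mem_iff_of_isUnit
    (Algebra.adjoin R (Set.range (polarizedPowerSum R κ))).toSubmodule hκ).mp smul_mem

end Averaging

/-- if `S_m` acts on `K[x_{ij} : 1 ≤ i ≤ N, 1 ≤ j ≤ m]` by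
simultaneously permuting the second index, then the ring of invariants is
generated as a `K`-algebra by the power sums
`s_{r_1,…,r_N} = ∑_j x_{1j}^{r_1} ⋯ x_{Nj}^{r_N}`. -/
theorem stmt15 (K : Type) [Field K] [CharZero K] (N m : ℕ)
    (f : MvPolynomial (Fin N × Fin m) K) :
    (∀ σ : Equiv.Perm (Fin m),
        MvPolynomial.rename (fun p : Fin N × Fin m => (p.1, σ p.2)) f = f) ↔
      f ∈ Algebra.adjoin K
        {g : MvPolynomial (Fin N × Fin m) K | ∃ r : Fin N → ℕ,
          g = ∑ j : Fin m, ∏ i : Fin N, (MvPolynomial.X (i, j)) ^ (r i)} := by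
  rw [← range_polarizedPowerSum K (Fin m)]
  exact stmt15_general (isUnit_iff_ne_zero.mpr (mod_cast Nat.factorial_ne_zero _)) f

end
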